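/- Let Ω be a finite probability space, let X, Y : Ω → D be two random variables defined on the same finite nonempty set D, and let A : D → Set D assign to each d ∈ D a subset A(d) ⊆ D such that (i) the cardinality |A(d)| is the same number |A| for all d ∈ D, and (ii) ⋃_{d ∈ D} A(d) = D. Then P[X ∈ A(Y)] ≤ |A| · 2^{−H̃∞(X | Y)}. -/

import Mathlib

open Finset Real

/-- Probability of an event `E` under the weight function `p` on a finite sample space. -/
noncomputable def pr {Ω : Type*} [Fintype Ω] (p : Ω → ℝ) (E : Set Ω) : ℝ :=
  ∑ ω, E.indicator p ω

/-- `P[X = x]`. -/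
noncomputable def prEq {Ω 𝒳 : Type*} [Fintype Ω] (p : Ω → ℝ) (X : Ω → 𝒳) (x : 𝒳) : ℝ :=
  pr p {ω | X ω = x}

/-- `P[X = x | Y = y]`, taken to be `0` when `P[Y = y] = 0`. -/
noncomputable def condProb {Ω 𝒳 𝒴 : Type*} [Fintype Ω]
    (p : Ω → ℝ) (X : Ω → 𝒳) (x : 𝒳) (Y : Ω → 𝒴) (y : 𝒴) : ℝ :=
  if prEq p Y y = 0 then 0 else pr p {ω | X ω = x ∧ Y ω = y} / prEq p Y y

/-- Average min-entropy `H̃∞(X | Y)`. -/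
noncomputable def avgMinEntropy {Ω 𝒳 𝒴 : Type*} [Fintype Ω]
    [Fintype 𝒳] [Nonempty 𝒳] [Fintype 𝒴]
    (p : Ω → ℝ) (X : Ω → 𝒳) (Y : Ω → 𝒴) : ℝ :=
  - Real.logb 2 (∑ y : 𝒴, prEq p Y y *
      (Finset.univ.sup' Finset.univ_nonempty fun x : 𝒳 => condProb p X x Y y))

/-- Min-entropy `H∞(X)`. -/
noncomputable def minEntropy {Ω 𝒳 : Type*} [Fintype Ω] [Fintype 𝒳] [Nonempty 𝒳]
    (p : Ω → ℝ) (X : Ω → 𝒳) : ℝ :=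
  - Real.logb 2 (Finset.univ.sup' Finset.univ_nonempty fun x : 𝒳 => prEq p X x)

/-!
Guessing `X` by the most likely value given `Y` succeeds with probability `2 ^ (-H̃∞(X | Y))`.
On each event `Y = y`, the event `X ∈ A y` splits into the `|A y|` events `X = x`, none of
which is more likely than that guess.
-/

section Pr

variable {Ω 𝒳 𝒴 : Type*} [Fintype Ω] {p : Ω → ℝ}

theorem pr_nonneg (hp : ∀ ω, 0 ≤ p ω) (E : Set Ω) : 0 ≤ pr p E :=
  Finset.sum_nonneg fun _ _ => Set.indicator_nonneg (fun ω _ => hp ω) _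

theorem pr_mono (hp : ∀ ω, 0 ≤ p ω) {E F : Set Ω} (hEF : E ⊆ F) : pr p E ≤ pr p F :=
  Finset.sum_le_sum fun ω _ => Set.indicator_le_indicator_of_subset hEF hp ω

theorem pr_univ (p : Ω → ℝ) : pr p Set.univ = ∑ ω, p ω := by
  simp [pr]

theorem pr_biUnion (p : Ω → ℝ) {ι : Type*} (s : Finset ι) (E : ι → Set Ω)
    (hE : (s : Set ι).PairwiseDisjoint E) :
    pr p (⋃ i ∈ s, E i) = ∑ i ∈ s, pr p (E i) := by
  simp only [pr, Finset.indicator_biUnion s E hE]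
  exact Finset.sum_comm

theorem pr_mem_inter_eq_sum (p : Ω → ℝ) (X : Ω → 𝒳) (s : Finset 𝒳) (E : Set Ω) :
    pr p ({ω | X ω ∈ s} ∩ E) = ∑ x ∈ s, pr p ({ω | X ω = x} ∩ E) := by
  have hdisj : (s : Set 𝒳).PairwiseDisjoint fun x => {ω | X ω = x} ∩ E := by
    intro x _ x' _ hne
    exact Set.disjoint_left.mpr fun ω hx hx' => hne (hx.1.symm.trans hx'.1)
  rw [← pr_biUnion p s _ hdisj]
  congr 1
  ext ω
  simp

theorem pr_eq_sum_fiber [Fintype 𝒴] (p : Ω → ℝ) (Y : Ω → 𝒴) (E : Set Ω) :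
    pr p E = ∑ y, pr p ({ω | Y ω = y} ∩ E) := by
  simpa using pr_mem_inter_eq_sum p Y Finset.univ E

theorem prEq_mul_condProb (hp : ∀ ω, 0 ≤ p ω) (X : Ω → 𝒳) (x : 𝒳) (Y : Ω → 𝒴) (y : 𝒴) :
    prEq p Y y * condProb p X x Y y = pr p {ω | X ω = x ∧ Y ω = y} := by
  by_cases hy : prEq p Y y = 0
  · have hle : pr p {ω | X ω = x ∧ Y ω = y} ≤ prEq p Y y := pr_mono hp fun _ hω => hω.2
    rw [hy, zero_mul]
    exact le_antisymm (pr_nonneg hp _) (hle.trans_eq hy)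
  · rw [condProb, if_neg hy, mul_div_cancel₀ _ hy]

end Pr

section GuessingProb

variable {Ω 𝒳 𝒴 : Type*} [Fintype Ω] [Fintype 𝒳] [Nonempty 𝒳] {p : Ω → ℝ}

/-- The probability, given `Y = y`, of a most likely value of `X`. As `condProb` does, it takes
the value `0` when `P[Y = y] = 0`. -/
noncomputable def maxCondProb (p : Ω → ℝ) (X : Ω → 𝒳) (Y : Ω → 𝒴) (y : 𝒴) : ℝ :=
  Finset.univ.sup' Finset.univ_nonempty fun x => condProb p X x Y y

/-- The average guessing probability of `X` given `Y`: the success probability of the strategy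
that, on observing `Y = y`, guesses a most likely value of `X`. It is the argument of the
logarithm in `avgMinEntropy`. -/
noncomputable def guessingProb [Fintype 𝒴] (p : Ω → ℝ) (X : Ω → 𝒳) (Y : Ω → 𝒴) : ℝ :=
  ∑ y, prEq p Y y * maxCondProb p X Y y

theorem pr_eq_and_eq_le (hp : ∀ ω, 0 ≤ p ω) (X : Ω → 𝒳) (x : 𝒳) (Y : Ω → 𝒴) (y : 𝒴) :
    pr p {ω | X ω = x ∧ Y ω = y} ≤ prEq p Y y * maxCondProb p X Y y := by
  rw [← prEq_mul_condProb hp]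
  exact mul_le_mul_of_nonneg_left
    (Finset.le_sup' (fun x => condProb p X x Y y) (Finset.mem_univ x)) (pr_nonneg hp _)

theorem prEq_mul_maxCondProb_nonneg (hp : ∀ ω, 0 ≤ p ω) (X : Ω → 𝒳) (Y : Ω → 𝒴) (y : 𝒴) :
    0 ≤ prEq p Y y * maxCondProb p X Y y :=
  (pr_nonneg hp _).trans (pr_eq_and_eq_le hp X (Classical.arbitrary 𝒳) Y y)

theorem pr_mem_and_eq_le_card_mul (hp : ∀ ω, 0 ≤ p ω) (X : Ω → 𝒳) (s : Finset 𝒳)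
    (Y : Ω → 𝒴) (y : 𝒴) :
    pr p {ω | X ω ∈ s ∧ Y ω = y} ≤ #s * (prEq p Y y * maxCondProb p X Y y) := by
  calc pr p {ω | X ω ∈ s ∧ Y ω = y}
      = ∑ x ∈ s, pr p {ω | X ω = x ∧ Y ω = y} := pr_mem_inter_eq_sum p X s {ω | Y ω = y}
    _ ≤ #s • (prEq p Y y * maxCondProb p X Y y) :=
        Finset.sum_le_card_nsmul _ _ _ fun x _ => pr_eq_and_eq_le hp X x Y y
    _ = #s * (prEq p Y y * maxCondProb p X Y y) := nsmul_eq_mul _ _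

variable [Fintype 𝒴]

theorem pr_mem_le_mul_guessingProb (hp : ∀ ω, 0 ≤ p ω) (X : Ω → 𝒳) (Y : Ω → 𝒴)
    (A : 𝒴 → Finset 𝒳) {m : ℕ} (hA : ∀ y, #(A y) ≤ m) :
    pr p {ω | X ω ∈ A (Y ω)} ≤ m * guessingProb p X Y := by
  have hfiber (y : 𝒴) :
      {ω | Y ω = y} ∩ {ω | X ω ∈ A (Y ω)} = {ω | X ω ∈ A y ∧ Y ω = y} := by
    ext ω
    simp only [Set.mem_inter_iff, Set.mem_ofPred_eq]
    grind
  calc pr p {ω | X ω ∈ A (Y ω)}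
      = ∑ y, pr p {ω | X ω ∈ A y ∧ Y ω = y} := by
        simp only [pr_eq_sum_fiber p Y {ω | X ω ∈ A (Y ω)}, hfiber]
    _ ≤ ∑ y, m * (prEq p Y y * maxCondProb p X Y y) := by
        refine Finset.sum_le_sum fun y _ => (pr_mem_and_eq_le_card_mul hp X (A y) Y y).trans ?_
        have hnonneg := prEq_mul_maxCondProb_nonneg hp X Y y
        gcongr
        exact hA y
    _ = m * guessingProb p X Y := (Finset.mul_sum _ _ _).symm

theorem guessingProb_pos (hp : ∀ ω, 0 ≤ p ω) (hpos : 0 < ∑ ω, p ω) (X : Ω → 𝒳) (Y : Ω → 𝒴) :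
    0 < guessingProb p X Y := by
  have hle : ∑ ω, p ω ≤ Fintype.card 𝒳 * guessingProb p X Y := by
    simpa [pr_univ] using
      pr_mem_le_mul_guessingProb hp X Y (fun _ => Finset.univ) fun _ => Finset.card_univ.le
  exact pos_of_mul_pos_right (hpos.trans_le hle) (Nat.cast_nonneg _)

theorem two_rpow_neg_avgMinEntropy (hp : ∀ ω, 0 ≤ p ω) (hpos : 0 < ∑ ω, p ω)
    (X : Ω → 𝒳) (Y : Ω → 𝒴) :
    (2 : ℝ) ^ (-avgMinEntropy p X Y) = guessingProb p X Y := by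
  have hentropy : avgMinEntropy p X Y = -Real.logb 2 (guessingProb p X Y) := rfl
  rw [hentropy, neg_neg,
    Real.rpow_logb two_pos (OfNat.ofNat_ne_one 2) (guessingProb_pos hp hpos X Y)]

end GuessingProb

theorem stmt_7_general {Ω 𝒳 𝒴 : Type*} [Fintype Ω] [Fintype 𝒳] [Nonempty 𝒳] [Fintype 𝒴]
    (p : Ω → ℝ) (hp : ∀ ω, 0 ≤ p ω) (hsum : ∑ ω, p ω = 1)
    (X : Ω → 𝒳) (Y : Ω → 𝒴) (A : 𝒴 → Finset 𝒳) (m : ℕ) (hcard : ∀ y, #(A y) ≤ m) :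
    pr p {ω | X ω ∈ A (Y ω)} ≤ m * (2 : ℝ) ^ (-avgMinEntropy p X Y) := by
  rw [two_rpow_neg_avgMinEntropy hp (hsum ▸ one_pos)]
  exact pr_mem_le_mul_guessingProb hp X Y A hcard

theorem stmt_7 {Ω D : Type*} [Fintype Ω] [Fintype D] [Nonempty D] [DecidableEq D]
    (p : Ω → ℝ) (hp : ∀ ω, 0 ≤ p ω) (hsum : ∑ ω, p ω = 1)
    (X Y : Ω → D) (A : D → Finset D) (m : ℕ)
    (hcard : ∀ d : D, (A d).card = m)
    (hcover : ∀ x : D, ∃ d : D, x ∈ A d) :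
    pr p {ω | X ω ∈ A (Y ω)} ≤ (m : ℝ) * (2 : ℝ) ^ (-(avgMinEntropy p X Y)) := by
  exact stmt_7_general p hp hsum X Y A m fun d => (hcard d).le
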